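/- Let C be a regular, irreducible curve that is projective over a field k, with function field F = k(C), arithmetic genus t ≥ 1, and a k-rational point O. Let S = { P in C : H^0(C, O_C(3t(O) − (P))) ≠ {0} } and let L_{3t} be the subgroup of K₂(F) generated by symbols {l,m} with l,m nonzero elements of H^0(C, O_C(3t(O))). Then the tame symbol induces an isomorphism K₂(F) / L_{3t} ≅ ∐_{P ∉ S} k(P)^*. In particular, the tame symbol T : K₂(F) → ∐_{P ∈ C} k(P)^* and its restriction L_{3t} → ∐_{P ∈ S} k(P)^* have the same kernel, and their cokernels are isomorphic. -/

import Mathlib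

open scoped TensorProduct

noncomputable section

/-- The set of Steinberg relations in `Fˣ ⊗_ℤ Fˣ` (written additively):
the elements `a ⊗ b` with `a + b = 1` in `F`. -/
def SteinbergSet (F : Type*) [Field F] :
    Set (TensorProduct ℤ (Additive Fˣ) (Additive Fˣ)) :=
  { x | ∃ a b : Fˣ, (a : F) + (b : F) = 1 ∧
      x = Additive.ofMul a ⊗ₜ[ℤ] Additive.ofMul b }

/-- Milnor's `K₂` of a field, via Matsumoto's presentation. -/
abbrev K2 (F : Type*) [Field F] :=
  (TensorProduct ℤ (Additive Fˣ) (Additive Fˣ)) ⧸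
    Submodule.span ℤ (SteinbergSet F)

/-- The symbol `{f, g}` in `K₂(F)`. -/
def symbol {F : Type*} [Field F] (f g : Fˣ) : K2 F :=
  Submodule.Quotient.mk (Additive.ofMul f ⊗ₜ[ℤ] Additive.ofMul g)

/-- The degree of a divisor `D` on the curve: `∑_P deg(P) · D(P)`,
where `deg P = [k(P) : k]`. -/
def divDeg (k : Type*) [Field k] {Pt : Type*} (res : Pt → Type*)
    [∀ P, Field (res P)] [∀ P, Algebra k (res P)] (D : Pt →₀ ℤ) : ℤ :=
  ∑ᶠ P, (Module.finrank k (res P) : ℤ) * D P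

/-- Axioms for a regular, irreducible curve `C`, projective over a field `k`, with
`H⁰(C, O_C) = k`, presented through: its function field `F = k(C)`, its set `Pt` of
closed points, the residue fields `res P = k(P)`, the normalized valuations `ord P`,
the evaluation maps `ev P` (evaluation at `P` of functions regular at `P`), the
Riemann-Roch spaces `L D = H⁰(C, O_C(D))`, and the arithmetic genus
`t = dim_k H¹(C, O_C)`, characterized by the Riemann-Roch relations. -/
structure IsProjCurve (k F : Type*) [Field k] [Field F] [Algebra k F]
    {Pt : Type*} (res : Pt → Type*) [∀ P, Field (res P)] [∀ P, Algebra k (res P)]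
    (ord : Pt → F → ℤ) (ev : ∀ P, F → res P)
    (L : (Pt →₀ ℤ) → Submodule k F) (t : ℕ) : Prop where
  finiteDimensional_res : ∀ P, FiniteDimensional k (res P)
  ord_mul : ∀ P (f g : F), f ≠ 0 → g ≠ 0 → ord P (f * g) = ord P f + ord P g
  ord_add : ∀ P (f g : F), f ≠ 0 → g ≠ 0 → f + g ≠ 0 →
      min (ord P f) (ord P g) ≤ ord P (f + g)
  ord_algebraMap : ∀ P (c : k), c ≠ 0 → ord P (algebraMap k F c) = 0
  ord_uniformizer : ∀ P, ∃ f : F, f ≠ 0 ∧ ord P f = 1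
  ord_separates : ∀ P Q, (∀ f : F, ord P f = ord Q f) → P = Q
  support_finite : ∀ f : F, f ≠ 0 → {P | ord P f ≠ 0}.Finite
  degree_formula : ∀ f : F, f ≠ 0 →
      ∑ᶠ P, (Module.finrank k (res P) : ℤ) * ord P f = 0
  ev_zero : ∀ P, ev P 0 = 0
  ev_one : ∀ P, ev P 1 = 1
  ev_add : ∀ P (f g : F), f ≠ 0 → g ≠ 0 → 0 ≤ ord P f → 0 ≤ ord P g →
      ev P (f + g) = ev P f + ev P g
  ev_mul : ∀ P (f g : F), f ≠ 0 → g ≠ 0 → 0 ≤ ord P f → 0 ≤ ord P g →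
      ev P (f * g) = ev P f * ev P g
  ev_algebraMap : ∀ P (c : k), ev P (algebraMap k F c) = algebraMap k (res P) c
  ev_eq_zero_iff : ∀ P (f : F), f ≠ 0 → 0 ≤ ord P f → (ev P f = 0 ↔ 0 < ord P f)
  ev_surjective : ∀ P (y : res P), ∃ f : F, f ≠ 0 ∧ 0 ≤ ord P f ∧ ev P f = y
  mem_L : ∀ (D : Pt →₀ ℤ) (f : F), f ∈ L D ↔ (f ≠ 0 → ∀ P, 0 ≤ D P + ord P f)
  finiteDimensional_L : ∀ D, FiniteDimensional k (L D)
  global_sections : ∀ f : F, f ∈ L 0 ↔ ∃ c : k, algebraMap k F c = f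
  rr_ineq : ∀ D : Pt →₀ ℤ,
      divDeg k res D + 1 - t ≤ (Module.finrank k (L D) : ℤ)
  rr_eq : ∀ D : Pt →₀ ℤ, 2 * (t : ℤ) - 2 < divDeg k res D →
      (Module.finrank k (L D) : ℤ) = divDeg k res D + 1 - t

/-- `T` is the tame symbol `K₂(F) → ∐_{P} k(P)^*`: it is determined by
`T_P({f,g}) = (-1)^{ord_P(f)·ord_P(g)} (f^{ord_P(g)} / g^{ord_P(f)})(P)`. -/
def IsTameSymbol {F : Type*} [Field F] {Pt : Type*} {res : Pt → Type*}
    [∀ P, Field (res P)]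
    (ord : Pt → F → ℤ) (ev : ∀ P, F → res P)
    (T : K2 F →+ Π₀ P : Pt, Additive ((res P)ˣ)) : Prop :=
  ∀ (f g : Fˣ) (P : Pt),
    ((Additive.toMul (T (symbol f g) P) : (res P)ˣ) : res P) =
      ev P (((-1 : Fˣ) ^ (ord P (f : F) * ord P (g : F)) *
        f ^ (ord P (g : F)) * g ^ (-ord P (f : F)) : Fˣ) : F)

/-- `L_d`: the subgroup of `K₂(F)` generated by the symbols `{l, m}` with `l, m`
nonzero elements of the Riemann-Roch space `H⁰(C, O_C(d(O)))`. -/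
def Lsub {k F : Type*} [Field k] [Field F] [Algebra k F] {Pt : Type*}
    (L : (Pt →₀ ℤ) → Submodule k F) (O : Pt) (d : ℤ) : AddSubgroup (K2 F) :=
  AddSubgroup.closure
    { x | ∃ l m : Fˣ, (l : F) ∈ L (Finsupp.single O d) ∧
        (m : F) ∈ L (Finsupp.single O d) ∧ x = symbol l m }

/-!
`K₂(F)` is the union of the increasing subgroups `L_d`, so the theorem follows by induction once the
tame symbol is known to identify `L_{d+1} / L_d` with `∐ k(P)^*`, the sum being over the zeros `P`
of sections of `O_C((d+1)(O))` that are not zeros of sections of `O_C(d(O))`, for all `d ≥ 3t`.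

Let `G_d` be the group generated by the nonzero sections of `O_C(d(O))`, and choose for each new
zero `P` a section `l_P` of `O_C((d+1)(O))` vanishing at `P`. A section of `O_C((d+1)(O))` without
new zeros lies in `G_d`: by Riemann-Roch its divisor of zeros splits into two parts, each of which
is contained in the divisor of zeros of a section of `O_C(d(O))`. Any other section is a constant
multiple of some `l_P`. As `l_P` differs from a constant multiple of `l_Q` by a section of
`O_C(d(O))`, the Steinberg relation shows that `L_{d+1}` is generated by `L_d` and the symbols
`{f, l_P}` with `f ∈ G_d`, whose only tame component at a point outside the zeros of sections of
`O_C(d(O))` is `f(P)` at `P`.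

It remains to see that `f(P) = 1` implies `{f, l_P} ∈ L_d`. If `a w` and `b v` are products of
sections with the same value at `P`, and `a`, `b` vanish on the remaining zeros of `l_P`, then
`b v - a w = q l_P` with `q` a section of `O_C((d-1)(O))`, and the Steinberg relation for this sum
gives `{a w / (b v), l_P} ∈ L_d`. When `d ≥ 3t` there are enough such sections: by a dimension count
in `k(P)`, two prescribed values can be written as fractions with a common denominator `b(P)`, and
hence every element of `G_d` can be replaced by a single fraction `a / b`.
-/

section Symbol

variable {F : Type*} [Field F]

theorem symbol_mul_left (a b c : Fˣ) : symbol (a * b) c = symbol a c + symbol b c := by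
  simp only [symbol, ofMul_mul, TensorProduct.add_tmul, Submodule.Quotient.mk_add]

theorem symbol_mul_right (a b c : Fˣ) : symbol a (b * c) = symbol a b + symbol a c := by
  simp only [symbol, ofMul_mul, TensorProduct.tmul_add, Submodule.Quotient.mk_add]

theorem symbol_one_left (a : Fˣ) : symbol 1 a = 0 := by
  simp only [symbol, ofMul_one, TensorProduct.zero_tmul, Submodule.Quotient.mk_zero]

theorem symbol_one_right (a : Fˣ) : symbol a 1 = 0 := by
  simp only [symbol, ofMul_one, TensorProduct.tmul_zero, Submodule.Quotient.mk_zero]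

theorem symbol_inv_left (a b : Fˣ) : symbol a⁻¹ b = -symbol a b := by
  simp only [symbol, ofMul_inv, TensorProduct.neg_tmul, Submodule.Quotient.mk_neg]

theorem symbol_inv_right (a b : Fˣ) : symbol a b⁻¹ = -symbol a b := by
  simp only [symbol, ofMul_inv, TensorProduct.tmul_neg, Submodule.Quotient.mk_neg]

theorem symbol_eq_zero_of_add_eq_one {a b : Fˣ} (h : (a : F) + b = 1) : symbol a b = 0 :=
  (Submodule.Quotient.mk_eq_zero _).mpr (Submodule.subset_span ⟨a, b, h, rfl⟩)

theorem symbol_neg_self (a : Fˣ) : symbol a (-a) = 0 := by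
  by_cases ha : (a : F) = 1
  · rw [Units.val_eq_one.mp ha, symbol_one_left]
  have h₁ : 1 - (a : F) ≠ 0 := sub_ne_zero.mpr (Ne.symm ha)
  have h₂ : 1 - (a : F)⁻¹ ≠ 0 := sub_ne_zero.mpr fun h => ha (inv_eq_one.mp h.symm)
  have hneg : -a = Units.mk0 _ h₁ * (Units.mk0 _ h₂)⁻¹ := by
    rw [eq_mul_inv_iff_mul_eq]
    ext
    simp only [Units.val_mul, Units.val_neg, Units.val_mk0]
    field_simp
    ring
  have hleft : symbol a (Units.mk0 _ h₁) = 0 := symbol_eq_zero_of_add_eq_one (by simp)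
  have hright : symbol a⁻¹ (Units.mk0 _ h₂) = 0 := symbol_eq_zero_of_add_eq_one (by simp)
  rw [symbol_inv_left, neg_eq_zero] at hright
  rw [hneg, symbol_mul_right, symbol_inv_right, hleft, hright, neg_zero, add_zero]

theorem symbol_self (a : Fˣ) : symbol a a = -symbol a (-1) := by
  have h := symbol_neg_self a
  rw [neg_eq_neg_one_mul, symbol_mul_right] at h
  exact eq_neg_of_add_eq_zero_right h

theorem symbol_swap (a b : Fˣ) : symbol a b = -symbol b a := by
  have h := symbol_neg_self (a * b)
  have hb : symbol b (-(a * b)) = symbol b a := by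
    rw [← mul_neg, symbol_mul_right, symbol_neg_self, add_zero]
  rw [symbol_mul_left, hb, ← neg_mul, symbol_mul_right, symbol_neg_self, zero_add] at h
  exact eq_neg_of_add_eq_zero_left h

theorem symbol_eq_of_add_eq {p q r : Fˣ} (h : (p : F) + q = r) :
    symbol p q = symbol p r + symbol r q - symbol r r := by
  have hdiv : ((p * r⁻¹ : Fˣ) : F) + ((q * r⁻¹ : Fˣ) : F) = 1 := by
    rw [Units.val_mul, Units.val_mul, ← add_mul, h, Units.mul_inv]
  have hst := symbol_eq_zero_of_add_eq_one hdiv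
  simp only [symbol_mul_left, symbol_mul_right, symbol_inv_left, symbol_inv_right] at hst
  rw [← sub_eq_zero, ← hst]
  abel

theorem symbol_mul_inv_eq_of_add_mul_eq {p q r l : Fˣ} (h : (p : F) + (q * l : Fˣ) = r) :
    symbol (p * r⁻¹) l = symbol p r + symbol r q - symbol r r - symbol p q := by
  have hrel := symbol_eq_of_add_eq h
  rw [symbol_mul_right, symbol_mul_right] at hrel
  rw [symbol_mul_left, symbol_inv_left, ← sub_eq_add_neg, sub_eq_sub_iff_add_eq_add, add_comm, hrel]
  abel

theorem symbol_mem_of_mem_closure {A B : Set Fˣ} {H : AddSubgroup (K2 F)}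
    (h : ∀ a ∈ A, ∀ b ∈ B, symbol a b ∈ H) {a b : Fˣ}
    (ha : a ∈ Subgroup.closure A) (hb : b ∈ Subgroup.closure B) : symbol a b ∈ H := by
  induction ha using Subgroup.closure_induction with
  | mem a ha =>
    induction hb using Subgroup.closure_induction with
    | mem b hb => exact h a ha b hb
    | one => rw [symbol_one_right]; exact zero_mem _
    | mul b c _ _ hb hc => rw [symbol_mul_right]; exact add_mem hb hc
    | inv b _ hb => rw [symbol_inv_right]; exact neg_mem hb
  | one => rw [symbol_one_left]; exact zero_mem _
  | mul a c _ _ ha hc => rw [symbol_mul_left]; exact add_mem ha hc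
  | inv a _ ha => rw [symbol_inv_left]; exact neg_mem ha

theorem K2_induction {motive : K2 F → Prop} (zero : motive 0)
    (symbol : ∀ a b : Fˣ, motive (symbol a b))
    (add : ∀ x y, motive x → motive y → motive (x + y)) (x : K2 F) : motive x := by
  obtain ⟨z, rfl⟩ := Submodule.Quotient.mk_surjective _ x
  induction z with
  | zero => exact zero
  | tmul a b => exact symbol a.toMul b.toMul
  | add x y hx hy => exact add _ _ hx hy

/-- The symbol `{f, l}` as a homomorphism in its first entry. -/
def symbolHom (l : Fˣ) : Fˣ →* Multiplicative (K2 F) where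
  toFun f := Multiplicative.ofAdd (symbol f l)
  map_one' := congrArg Multiplicative.ofAdd (symbol_one_left l)
  map_mul' f g := congrArg Multiplicative.ofAdd (symbol_mul_left f g l)

/-- The finite sum of symbols `∑ᵢ {fᵢ, lᵢ}` for a family `f` of elements of `G`, written additively
in `f`. -/
def symbolSum {ι : Type*} (G : Subgroup Fˣ) (l : ι → Fˣ) : (ι →₀ Additive G) →+ K2 F :=
  Finsupp.liftAddHom fun i => ((symbolHom (l i)).comp G.subtype).toAdditiveLeft

theorem symbolSum_apply {ι : Type*} (G : Subgroup Fˣ) (l : ι → Fˣ) (f : ι →₀ Additive G) :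
    symbolSum G l f = ∑ i ∈ f.support, symbol (f i).toMul.1 (l i) :=
  rfl

theorem symbol_mem_range_symbolSum {ι : Type*} {G : Subgroup Fˣ} (l : ι → Fˣ) (i : ι) {f : Fˣ}
    (hf : f ∈ G) : symbol f (l i) ∈ (symbolSum G l).range :=
  ⟨Finsupp.single i (Additive.ofMul ⟨f, hf⟩), Finsupp.liftAddHom_apply_single _ _ _⟩

theorem symbol_mem_sup_range_symbolSum {ι : Type*} {G : Subgroup Fˣ} {l : ι → Fˣ}
    {H : AddSubgroup (K2 F)} (hG : ∀ f ∈ G, ∀ g ∈ G, symbol f g ∈ H) (hneg : -1 ∈ G)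
    (hl : Pairwise fun i j => ∃ c ∈ G, ∃ r ∈ G, (l i : F) + (c * l j : Fˣ) = r) {a b : Fˣ}
    (ha : a ∈ Subgroup.closure (G ∪ Set.range l)) (hb : b ∈ Subgroup.closure (G ∪ Set.range l)) :
    symbol a b ∈ H ⊔ (symbolSum G l).range := by
  have hGG : ∀ f ∈ G, ∀ g ∈ G, symbol f g ∈ H ⊔ (symbolSum G l).range :=
    fun f hf g hg => AddSubgroup.mem_sup_left (hG f hf g hg)
  have hGl : ∀ f ∈ G, ∀ i, symbol f (l i) ∈ H ⊔ (symbolSum G l).range :=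
    fun f hf i => AddSubgroup.mem_sup_right (symbol_mem_range_symbolSum l i hf)
  have hlG : ∀ f ∈ G, ∀ i, symbol (l i) f ∈ H ⊔ (symbolSum G l).range := fun f hf i => by
    rw [symbol_swap]
    exact neg_mem (hGl f hf i)
  have hll : ∀ i j, symbol (l i) (l j) ∈ H ⊔ (symbolSum G l).range := fun i j => by
    obtain rfl | hij := eq_or_ne i j
    · rw [symbol_self]
      exact neg_mem (hlG _ hneg i)
    obtain ⟨c, hc, r, hr, h⟩ := hl hij
    have hsum := symbol_eq_of_add_eq h
    rw [symbol_mul_right, symbol_mul_right] at hsum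
    rw [eq_sub_of_add_eq' hsum]
    exact sub_mem (sub_mem (add_mem (hlG r hr i) (add_mem (hGG r hr c hc) (hGl r hr j)))
      (hGG r hr r hr)) (hlG c hc i)
  refine symbol_mem_of_mem_closure ?_ ha hb
  rintro a (ha | ⟨i, rfl⟩) b (hb | ⟨j, rfl⟩)
  exacts [hGG a ha b hb, hGl a ha j, hlG b hb i, hll i j]

end Symbol

theorem eq_one_of_mem_closure_of_fractions {G K A : Type*} [CommGroup G] [CommGroup K] [CommGroup A]
    (ε : G →* K) (σ : G →* A) {V W : Set G} (hV : 1 ∈ V)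
    (hσ : ∀ a ∈ W, ∀ b ∈ W, ∀ v ∈ V, ∀ w ∈ V, ε a / ε b = ε v / ε w → σ a / σ b = σ v / σ w)
    (hWV : W ⊆ V) (hW : ∀ y z : K, ∃ b ∈ W, ∃ a ∈ W, ∃ c ∈ V, ε a = y * ε b ∧ ε c = z * ε b)
    {f : G} (hf : f ∈ Subgroup.closure V) (hεf : ε f = 1) : σ f = 1 := by
  suffices hfrac : ∃ a ∈ W, ∃ b ∈ W, ε f = ε a / ε b ∧ σ f = σ a / σ b by
    obtain ⟨a, ha, b, hb, hε, hσf⟩ := hfrac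
    rw [hσf, hσ a ha b hb 1 hV 1 hV (by rw [← hε, hεf, div_self']), div_self']
  clear hεf
  induction hf using Subgroup.closure_induction with
  | mem f hf =>
    obtain ⟨b, hb, a, ha, -, -, hab, -⟩ := hW (ε f) 1
    have hε : ε a / ε b = ε f := div_eq_of_eq_mul' (hab.trans (mul_comm _ _))
    refine ⟨a, ha, b, hb, hε.symm, ?_⟩
    rw [hσ a ha b hb f hf 1 hV (by rw [hε, map_one, div_one]), map_one, div_one]
  | one =>
    obtain ⟨b, hb, -⟩ := hW 1 1
    exact ⟨b, hb, b, hb, by simp, by simp⟩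
  | inv f _ hfrac =>
    obtain ⟨a, ha, b, hb, hε, hσf⟩ := hfrac
    exact ⟨b, hb, a, ha, by rw [map_inv, hε, inv_div], by rw [map_inv, hσf, inv_div]⟩
  | mul f g _ _ hf hg =>
    obtain ⟨a, ha, b, hb, hεf, hσf⟩ := hf
    obtain ⟨c, hc, d, hd, hεg, hσg⟩ := hg
    -- Rewrite `f` and `g` as fractions `p / q` and `q / r` that can be composed.
    obtain ⟨q, hq, p, hp, r, hr, hpq, hrq⟩ := hW (ε f) (ε g)⁻¹
    have hεpq : ε f = ε p / ε q := eq_div_of_mul_eq' hpq.symm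
    have hεqr : ε g = ε q / ε r := by rw [hrq, div_mul_cancel_right, inv_inv]
    have hεpr : ε (f * g) = ε p / ε r := by rw [map_mul, hεpq, hεqr, div_mul_div_cancel]
    have hσpr : σ (f * g) = σ p / σ r := by
      rw [map_mul, hσf, hσ a ha b hb p (hWV hp) q (hWV hq) (hεf.symm.trans hεpq), hσg,
        hσ c hc d hd q (hWV hq) r hr (hεg.symm.trans hεqr), div_mul_div_cancel]
    obtain ⟨t, ht, s, hs, -, -, hst, -⟩ := hW (ε (f * g)) 1
    have hεst : ε (f * g) = ε s / ε t := eq_div_of_mul_eq' hst.symm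
    exact ⟨s, hs, t, ht, hεst,
      hσpr.trans (hσ s hs t ht p (hWV hp) r hr (hεst.symm.trans hεpr)).symm⟩

theorem finrank_add_finrank_le_finrank_inf_add {k M : Type*} [DivisionRing k] [AddCommGroup M]
    [Module k M] [FiniteDimensional k M] (A B : Submodule k M) :
    Module.finrank k A + Module.finrank k B ≤
      Module.finrank k (A ⊓ B : Submodule k M) + Module.finrank k M := by
  rw [← Submodule.finrank_sup_add_finrank_inf_eq A B, add_comm]
  exact Nat.add_le_add_left (Submodule.finrank_le _) _

theorem finrank_comap_mulLeft {k K : Type*} [CommRing k] [Ring K] [Algebra k K]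
    (A : Submodule k K) (y : Kˣ) :
    Module.finrank k (A.comap (LinearMap.mulLeft k (y : K))) = Module.finrank k A := by
  rw [← Units.toLinearMap_mulLeftLinearEquiv, Submodule.comap_equiv_eq_map_symm]
  exact LinearEquiv.finrank_map_eq _ A

theorem exists_mem_mul_mem_mul_mem {k K : Type*} [Field k] [DivisionRing K] [Algebra k K]
    [FiniteDimensional k K] (W V V' : Submodule k K) (y z : Kˣ)
    (h : 2 * Module.finrank k K <
      Module.finrank k W + Module.finrank k V + Module.finrank k V') :
    ∃ b : Kˣ, (b : K) ∈ W ∧ (y * b : K) ∈ V ∧ (z * b : K) ∈ V' := by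
  have h₁ := finrank_add_finrank_le_finrank_inf_add W (V.comap (LinearMap.mulLeft k (y : K)))
  have h₂ := finrank_add_finrank_le_finrank_inf_add
    (W ⊓ V.comap (LinearMap.mulLeft k (y : K))) (V'.comap (LinearMap.mulLeft k (z : K)))
  rw [finrank_comap_mulLeft] at h₁ h₂
  have h₃ : 1 ≤ Module.finrank k (W ⊓ V.comap (LinearMap.mulLeft k (y : K)) ⊓
      V'.comap (LinearMap.mulLeft k (z : K)) : Submodule k K) := by omega
  obtain ⟨b, ⟨⟨hbW, hbV⟩, hbV'⟩, hb⟩ :=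
    Submodule.exists_mem_ne_zero_of_ne_bot (Submodule.one_le_finrank_iff.mp h₃)
  exact ⟨Units.mk0 b hb, hbW, hbV, hbV'⟩

section Degree

variable {k : Type*} [Field k] {Pt : Type*} {res : Pt → Type*}
  [∀ P, Field (res P)] [∀ P, Algebra k (res P)]

theorem divDeg_eq_sum (D : Pt →₀ ℤ) :
    divDeg k res D = D.sum fun P n => (Module.finrank k (res P) : ℤ) * n := by
  refine finsum_eq_finsetSum_of_support_subset _ fun P hP => ?_
  simp only [Function.mem_support, ne_eq, mul_eq_zero, not_or] at hP
  simpa using hP.2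

theorem divDeg_zero : divDeg k res (0 : Pt →₀ ℤ) = 0 := by
  rw [divDeg_eq_sum, Finsupp.sum_zero_index]

theorem divDeg_add (D E : Pt →₀ ℤ) :
    divDeg k res (D + E) = divDeg k res D + divDeg k res E := by
  simp only [divDeg_eq_sum]
  exact Finsupp.sum_add_index' (fun _ => mul_zero _) fun _ _ _ => mul_add _ _ _

theorem divDeg_sub (D E : Pt →₀ ℤ) :
    divDeg k res (D - E) = divDeg k res D - divDeg k res E := by
  rw [eq_sub_iff_add_eq, ← divDeg_add, sub_add_cancel]

theorem divDeg_single (P : Pt) (n : ℤ) :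
    divDeg k res (Finsupp.single P n) = Module.finrank k (res P) * n := by
  rw [divDeg_eq_sum]
  exact Finsupp.sum_single_index (mul_zero _)

theorem divDeg_single_of_finrank_eq_one {O : Pt} (hO : Module.finrank k (res O) = 1) (n : ℤ) :
    divDeg k res (Finsupp.single O n) = n := by
  rw [divDeg_single, hO, Nat.cast_one, one_mul]

theorem divDeg_nonneg {D : Pt →₀ ℤ} (hD : 0 ≤ D) : 0 ≤ divDeg k res D := by
  rw [divDeg_eq_sum]
  exact Finset.sum_nonneg fun P _ => mul_nonneg (Int.natCast_nonneg _) (hD P)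

theorem exists_pos_of_divDeg_pos {D : Pt →₀ ℤ} (h : 0 < divDeg k res D) : ∃ P, 0 < D P := by
  by_contra! hD
  have hneg := divDeg_nonneg (k := k) (res := res) (sub_nonneg.mpr (show D ≤ 0 from hD))
  rw [divDeg_sub, divDeg_zero] at hneg
  linarith

theorem single_one_le_of_pos {D : Pt →₀ ℤ} (hD : 0 ≤ D) {P : Pt} (hP : 0 < D P) :
    Finsupp.single P 1 ≤ D := by
  intro Q
  obtain rfl | hQ := eq_or_ne Q P
  · rwa [Finsupp.single_eq_same]
  · rw [Finsupp.single_eq_of_ne hQ]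
    exact hD Q

theorem finrank_le_divDeg {D : Pt →₀ ℤ} (hD : 0 ≤ D) {P : Pt} (hP : 0 < D P) :
    (Module.finrank k (res P) : ℤ) ≤ divDeg k res D := by
  have h := divDeg_nonneg (k := k) (res := res) (sub_nonneg.mpr (single_one_le_of_pos hD hP))
  rw [divDeg_sub, divDeg_single] at h
  linarith

theorem exists_le_divDeg_mem_Ico [∀ P, FiniteDimensional k (res P)] {m : ℤ} (hm : 0 < m) {b : ℕ}
    {D : Pt →₀ ℤ} (hD : 0 ≤ D) (hmD : m ≤ divDeg k res D)
    (hb : ∀ P, 0 < D P → Module.finrank k (res P) ≤ b) :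
    ∃ E, 0 ≤ E ∧ E ≤ D ∧ divDeg k res E ∈ Set.Ico m (m + b) := by
  obtain h | h := lt_or_ge (divDeg k res D) (m + b)
  · exact ⟨D, hD, le_rfl, hmD, h⟩
  obtain ⟨P, hP⟩ := exists_pos_of_divDeg_pos (hm.trans_le hmD)
  have hPb := hb P hP
  have : 0 < Module.finrank k (res P) := Module.finrank_pos
  have hle : D - Finsupp.single P 1 ≤ D := sub_le_self _ (Finsupp.single_nonneg.mpr zero_le_one)
  have hdeg : divDeg k res (D - Finsupp.single P 1) =
      divDeg k res D - Module.finrank k (res P) := by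
    rw [divDeg_sub, divDeg_single, mul_one]
  obtain ⟨E, hE, hED, hEdeg⟩ := exists_le_divDeg_mem_Ico hm
    (sub_nonneg.mpr (single_one_le_of_pos hD hP)) (by omega)
    fun Q hQ => hb Q (hQ.trans_le (hle Q))
  exact ⟨E, hE, hED.trans hle, hEdeg⟩
termination_by (divDeg k res D).toNat
decreasing_by omega

end Degree

theorem ne_bot_iff_exists_unit_mem {k K : Type*} [Semiring k] [DivisionRing K] [Module k K]
    {V : Submodule k K} : V ≠ ⊥ ↔ ∃ u : Kˣ, (u : K) ∈ V :=
  V.ne_bot_iff.trans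
    ⟨fun ⟨f, hf, hf0⟩ => ⟨Units.mk0 f hf0, hf⟩, fun ⟨u, hu⟩ => ⟨u, hu, u.ne_zero⟩⟩

section Sections

variable {k F : Type*} [Field k] [Field F] [Algebra k F] {Pt : Type*}

/-- The closed points at which some nonzero section of `O_C(d(O))` vanishes; the set `S` of the
theorem is the case `d = 3t`. -/
def sectionZeros (L : (Pt →₀ ℤ) → Submodule k F) (O : Pt) (d : ℤ) : Set Pt :=
  {P | L (Finsupp.single O d - Finsupp.single P 1) ≠ ⊥}

/-- The zeros of sections of `O_C((d+1)(O))` that are not zeros of sections of `O_C(d(O))`. -/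
def newZeros (L : (Pt →₀ ℤ) → Submodule k F) (O : Pt) (d : ℤ) : Set Pt :=
  sectionZeros L O (d + 1) \ sectionZeros L O d

/-- The subgroup of `Fˣ` generated by the nonzero sections of `O_C(d(O))`, so that `Lsub L O d` is
generated by the symbols with both entries in it. -/
def sectionGroup (L : (Pt →₀ ℤ) → Submodule k F) (O : Pt) (d : ℤ) : Subgroup Fˣ :=
  Subgroup.closure {u | (u : F) ∈ L (Finsupp.single O d)}

variable {L : (Pt →₀ ℤ) → Submodule k F} {O : Pt} {d : ℤ}

theorem mem_sectionGroup {u : Fˣ} (hu : (u : F) ∈ L (Finsupp.single O d)) :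
    u ∈ sectionGroup L O d :=
  Subgroup.subset_closure hu

theorem symbol_mem_Lsub {a b : Fˣ} (ha : a ∈ sectionGroup L O d) (hb : b ∈ sectionGroup L O d) :
    symbol a b ∈ Lsub L O d := by
  refine symbol_mem_of_mem_closure (fun l hl m hm => AddSubgroup.subset_closure ?_) ha hb
  exact ⟨l, m, hl, hm, rfl⟩

end Sections

/-- The component at `P` of the tame symbol of `{f, l}`, as a homomorphism in `f`. -/
def tameHom {F Pt : Type*} [Field F] {res : Pt → Type*} [∀ P, Field (res P)]
    (T : K2 F →+ Π₀ P : Pt, Additive ((res P)ˣ)) (P : Pt) (l : Fˣ) : Fˣ →* (res P)ˣ :=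
  (AddMonoidHom.toMultiplicativeLeft ((DFinsupp.evalAddMonoidHom P).comp T)).comp (symbolHom l)

namespace IsProjCurve

variable {k F : Type*} [Field k] [Field F] [Algebra k F]
  {Pt : Type*} {res : Pt → Type*} [∀ P, Field (res P)] [∀ P, Algebra k (res P)]
  {ord : Pt → F → ℤ} {ev : ∀ P, F → res P} {L : (Pt →₀ ℤ) → Submodule k F} {t : ℕ}
  (hC : IsProjCurve k F res ord ev L t)

include hC

theorem ord_units_mul (P : Pt) (u v : Fˣ) : ord P ((u * v : Fˣ) : F) = ord P u + ord P v :=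
  hC.ord_mul P u v u.ne_zero v.ne_zero

/-- The divisor of a nonzero rational function. -/
def divisor (u : Fˣ) : Pt →₀ ℤ :=
  Finsupp.ofSupportFinite (fun P => ord P u) (hC.support_finite u u.ne_zero)

theorem divisor_apply (u : Fˣ) (P : Pt) : hC.divisor u P = ord P u :=
  rfl

theorem divisor_mul (u v : Fˣ) : hC.divisor (u * v) = hC.divisor u + hC.divisor v :=
  Finsupp.ext fun P => hC.ord_units_mul P u v

theorem divisor_one : hC.divisor 1 = 0 := by
  have h := hC.divisor_mul 1 1
  rwa [mul_one, left_eq_add] at h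

theorem divisor_inv (u : Fˣ) : hC.divisor u⁻¹ = -hC.divisor u := by
  rw [eq_neg_iff_add_eq_zero, ← hC.divisor_mul, inv_mul_cancel, hC.divisor_one]

theorem divDeg_divisor (u : Fˣ) : divDeg k res (hC.divisor u) = 0 :=
  hC.degree_formula u u.ne_zero

theorem units_mem_L {D : Pt →₀ ℤ} {u : Fˣ} : (u : F) ∈ L D ↔ 0 ≤ D + hC.divisor u := by
  rw [hC.mem_L]
  exact ⟨fun h P => h u.ne_zero P, fun h _ P => h P⟩

theorem mem_L_neg_divisor (u : Fˣ) : (u : F) ∈ L (-hC.divisor u) := by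
  rw [hC.units_mem_L, neg_add_cancel]

theorem inv_mem_L_divisor (u : Fˣ) : ((u⁻¹ : Fˣ) : F) ∈ L (hC.divisor u) := by
  rw [hC.units_mem_L, hC.divisor_inv, add_neg_cancel]

theorem mul_mem_L {D E : Pt →₀ ℤ} {f g : F} (hf : f ∈ L D) (hg : g ∈ L E) :
    f * g ∈ L (D + E) := by
  obtain rfl | hf0 := eq_or_ne f 0
  · rw [zero_mul]
    exact zero_mem _
  obtain rfl | hg0 := eq_or_ne g 0
  · rw [mul_zero]
    exact zero_mem _
  lift f to Fˣ using hf0.isUnit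
  lift g to Fˣ using hg0.isUnit
  rw [← Units.val_mul, hC.units_mem_L, hC.divisor_mul, add_add_add_comm]
  exact add_nonneg (hC.units_mem_L.mp hf) (hC.units_mem_L.mp hg)

theorem L_mono {D E : Pt →₀ ℤ} (h : D ≤ E) : L D ≤ L E := fun _ hf =>
  (hC.mem_L _ _).mpr fun hf0 P =>
    ((hC.mem_L _ _).mp hf hf0 P).trans (add_le_add_left (h P) _)

theorem L_ne_bot_of_le_divDeg {D : Pt →₀ ℤ} (h : (t : ℤ) ≤ divDeg k res D) : L D ≠ ⊥ := by
  intro hbot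
  have hrr := hC.rr_ineq D
  rw [hbot, finrank_bot] at hrr
  omega

theorem algebraMap_mem_L {D : Pt →₀ ℤ} (hD : 0 ≤ D) (c : k) : algebraMap k F c ∈ L D :=
  hC.L_mono hD ((hC.global_sections _).mpr ⟨c, rfl⟩)

theorem units_mem_L_sub_single {D : Pt →₀ ℤ} {u : Fˣ} (hu : (u : F) ∈ L D) {P : Pt}
    (hP : 0 < (D + hC.divisor u) P) : (u : F) ∈ L (D - Finsupp.single P 1) := by
  rw [hC.units_mem_L, sub_add_eq_add_sub, sub_nonneg]
  exact single_one_le_of_pos (hC.units_mem_L.mp hu) hP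

theorem ord_nonneg_of_mem_L {D : Pt →₀ ℤ} {P : Pt} (hP : D P = 0) {f : F} (hf : f ∈ L D)
    (hf0 : f ≠ 0) : 0 ≤ ord P f := by
  simpa only [hP, zero_add] using (hC.mem_L _ _).mp hf hf0 P

theorem ev_add_of_mem_L {D : Pt →₀ ℤ} {P : Pt} (hP : D P = 0) {f g : F} (hf : f ∈ L D)
    (hg : g ∈ L D) : ev P (f + g) = ev P f + ev P g := by
  obtain rfl | hf0 := eq_or_ne f 0
  · rw [zero_add, hC.ev_zero, zero_add]
  obtain rfl | hg0 := eq_or_ne g 0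
  · rw [add_zero, hC.ev_zero, add_zero]
  exact hC.ev_add P f g hf0 hg0 (hC.ord_nonneg_of_mem_L hP hf hf0)
    (hC.ord_nonneg_of_mem_L hP hg hg0)

theorem ev_mul_of_mem_L {D E : Pt →₀ ℤ} {P : Pt} (hD : D P = 0) (hE : E P = 0) {f g : F}
    (hf : f ∈ L D) (hg : g ∈ L E) : ev P (f * g) = ev P f * ev P g := by
  obtain rfl | hf0 := eq_or_ne f 0
  · rw [zero_mul, hC.ev_zero, zero_mul]
  obtain rfl | hg0 := eq_or_ne g 0
  · rw [mul_zero, hC.ev_zero, mul_zero]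
  exact hC.ev_mul P f g hf0 hg0 (hC.ord_nonneg_of_mem_L hD hf hf0)
    (hC.ord_nonneg_of_mem_L hE hg hg0)

/-- Evaluation at a point `P` outside the support of `D`, as a linear map on `H⁰(C, O_C(D))`. -/
def evalLin {D : Pt →₀ ℤ} {P : Pt} (hP : D P = 0) : L D →ₗ[k] res P where
  toFun f := ev P f
  map_add' f g := hC.ev_add_of_mem_L hP f.2 g.2
  map_smul' c f := by
    rw [Submodule.coe_smul, Algebra.smul_def, RingHom.id_apply, Algebra.smul_def,
      hC.ev_mul_of_mem_L (D := 0) rfl hP (hC.algebraMap_mem_L le_rfl c) f.2, hC.ev_algebraMap]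

theorem mem_L_sub_single_of_ev_eq_zero {D : Pt →₀ ℤ} {P : Pt} (hP : D P = 0) {f : F}
    (hf : f ∈ L D) (h : ev P f = 0) : f ∈ L (D - Finsupp.single P 1) := by
  obtain rfl | hf0 := eq_or_ne f 0
  · exact zero_mem _
  have hpos : 0 < ord P f :=
    (hC.ev_eq_zero_iff P f hf0 (hC.ord_nonneg_of_mem_L hP hf hf0)).mp h
  lift f to Fˣ using hf0.isUnit
  refine hC.units_mem_L_sub_single hf ?_
  rwa [Finsupp.add_apply, hP, zero_add, hC.divisor_apply]

theorem sub_mem_L_sub_single {D : Pt →₀ ℤ} {P : Pt} (hP : D P = 0) {f g : F} (hf : f ∈ L D)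
    (hg : g ∈ L D) (h : ev P f = ev P g) : f - g ∈ L (D - Finsupp.single P 1) :=
  hC.mem_L_sub_single_of_ev_eq_zero hP (sub_mem hf hg)
    ((map_sub (hC.evalLin hP) ⟨f, hf⟩ ⟨g, hg⟩).trans (sub_eq_zero.mpr h))

theorem evalLin_injective {D : Pt →₀ ℤ} {P : Pt} (hP : D P = 0)
    (hbot : L (D - Finsupp.single P 1) = ⊥) : Function.Injective (hC.evalLin hP) := by
  rw [injective_iff_map_eq_zero]
  intro f hf
  have hmem := hC.mem_L_sub_single_of_ev_eq_zero hP f.2 hf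
  rw [hbot, Submodule.mem_bot] at hmem
  exact Subtype.ext hmem

theorem le_finrank_range_evalLin {D : Pt →₀ ℤ} {P : Pt} (hP : D P = 0)
    (hbot : L (D - Finsupp.single P 1) = ⊥) :
    divDeg k res D + 1 - t ≤ Module.finrank k (LinearMap.range (hC.evalLin hP)) := by
  rw [LinearMap.finrank_range_of_inj (hC.evalLin_injective hP hbot)]
  exact hC.rr_ineq D

theorem exists_unit_ev_eq {D : Pt →₀ ℤ} {P : Pt} (hP : D P = 0) (y : (res P)ˣ)
    (hy : (y : res P) ∈ LinearMap.range (hC.evalLin hP)) :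
    ∃ u : Fˣ, (u : F) ∈ L D ∧ ev P u = y := by
  obtain ⟨⟨f, hf⟩, hfy⟩ := hy
  have hf0 : f ≠ 0 := fun h => y.ne_zero (hfy.symm.trans ((congrArg (ev P) h).trans (hC.ev_zero P)))
  exact ⟨Units.mk0 f hf0, hf, hfy⟩

variable {O : Pt} {d : ℤ}

theorem L_single_mono {e : ℤ} (h : d ≤ e) :
    L (Finsupp.single O d) ≤ L (Finsupp.single O e) :=
  hC.L_mono (Finsupp.single_le_single.mpr h)

theorem sectionZeros_mono {e : ℤ} (h : d ≤ e) : sectionZeros L O d ⊆ sectionZeros L O e :=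
  fun _ hP => ne_bot_of_le_ne_bot hP
    (hC.L_mono (sub_le_sub_right (Finsupp.single_le_single.mpr h) _))

theorem sectionGroup_mono {e : ℤ} (h : d ≤ e) : sectionGroup L O d ≤ sectionGroup L O e :=
  Subgroup.closure_mono fun _ hu => hC.L_single_mono h hu

theorem Lsub_mono {e : ℤ} (h : d ≤ e) : Lsub L O d ≤ Lsub L O e := by
  refine AddSubgroup.closure_mono ?_
  rintro _ ⟨l, m, hl, hm, rfl⟩
  exact ⟨l, m, hC.L_single_mono h hl, hC.L_single_mono h hm, rfl⟩

theorem mem_sectionGroup_of_mem_L_sub {E : Pt →₀ ℤ} (hE : 0 ≤ E) {u : Fˣ}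
    (hu : (u : F) ∈ L (Finsupp.single O d - E)) : u ∈ sectionGroup L O d :=
  mem_sectionGroup (hC.L_mono (sub_le_self _ hE) hu)

theorem mem_sectionGroup_of_eq_algebraMap (hd : 0 ≤ d) {u : Fˣ} {c : k}
    (hu : (u : F) = algebraMap k F c) : u ∈ sectionGroup L O d :=
  mem_sectionGroup (hu ▸ hC.algebraMap_mem_L (Finsupp.single_nonneg.mpr hd) c)

theorem neg_one_mem_sectionGroup (hd : 0 ≤ d) : (-1 : Fˣ) ∈ sectionGroup L O d :=
  hC.mem_sectionGroup_of_eq_algebraMap hd (c := -1) (by simp)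

/-- The zeros other than `P` of a section `l` of `O_C((d+1)(O))` vanishing at `P`: the divisor `E`
with `(l) = P + E - (d+1)(O)`. -/
def residualDivisor (l : Fˣ) (P O : Pt) (d : ℤ) : Pt →₀ ℤ :=
  Finsupp.single O (d + 1) - Finsupp.single P 1 + hC.divisor l

theorem residualDivisor_nonneg {l : Fˣ} {P : Pt}
    (hl : (l : F) ∈ L (Finsupp.single O (d + 1) - Finsupp.single P 1)) :
    0 ≤ hC.residualDivisor l P O d :=
  hC.units_mem_L.mp hl

theorem tame_symbol_eq_zero {T : K2 F →+ Π₀ P : Pt, Additive ((res P)ˣ)}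
    (hT : IsTameSymbol ord ev T) {P : Pt} {f g : Fˣ} (hf : ord P f = 0) (hg : ord P g = 0) :
    T (symbol f g) P = 0 := by
  have h := hT f g P
  rw [hf, hg] at h
  simp only [mul_zero, zpow_zero, neg_zero, mul_one, Units.val_one, hC.ev_one] at h
  exact Additive.toMul.injective (Units.ext h)

section RationalPoint

variable (hO : Module.finrank k (res O) = 1)

include hO

theorem exists_sub_smul_mem_L {D : Pt →₀ ℤ} {f : F} {m : Fˣ} (hf : f ∈ L D)
    (hm : (m : F) ∈ L D) (hm' : (m : F) ∉ L (D - Finsupp.single O 1)) :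
    ∃ c : k, f - c • (m : F) ∈ L (D - Finsupp.single O 1) := by
  have hE : 0 ≤ D + hC.divisor m := hC.units_mem_L.mp hm
  have hEO : (D + hC.divisor m) O = 0 :=
    le_antisymm (not_lt.mp fun h => hm' (hC.units_mem_L_sub_single hm h)) (hE O)
  have hfm : f * (m⁻¹ : Fˣ) ∈ L (D + hC.divisor m) := hC.mul_mem_L hf (hC.inv_mem_L_divisor m)
  obtain ⟨c, hc⟩ : ∃ c : k, algebraMap k (res O) c = ev O (f * (m⁻¹ : Fˣ)) := by
    obtain ⟨c, hc⟩ := (finrank_eq_one_iff_of_nonzero' (1 : res O) one_ne_zero).mp hO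
      (ev O (f * (m⁻¹ : Fˣ)))
    exact ⟨c, by rw [Algebra.algebraMap_eq_smul_one, hc]⟩
  have hcL : algebraMap k F c ∈ L (D + hC.divisor m) := hC.algebraMap_mem_L hE c
  have hmem := hC.mul_mem_L (hC.sub_mem_L_sub_single hEO hfm hcL
    (hc.symm.trans (hC.ev_algebraMap O c).symm)) (hC.mem_L_neg_divisor m)
  refine ⟨c, ?_⟩
  rwa [sub_mul, Units.inv_mul_cancel_right, ← Algebra.smul_def,
    show D + hC.divisor m - Finsupp.single O 1 + -hC.divisor m = D - Finsupp.single O 1 by abel]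
    at hmem

theorem L_single_sub_ne_bot {E : Pt →₀ ℤ} (hE : divDeg k res E + t ≤ d) :
    L (Finsupp.single O d - E) ≠ ⊥ := by
  refine hC.L_ne_bot_of_le_divDeg ?_
  rw [divDeg_sub, divDeg_single_of_finrank_eq_one hO]
  linarith

theorem mem_sectionZeros_of_finrank_le {P : Pt} (h : Module.finrank k (res P) + t ≤ d) :
    P ∈ sectionZeros L O d :=
  hC.L_single_sub_ne_bot hO (by rwa [divDeg_single, mul_one])

theorem ne_of_notMem_sectionZeros (hd : t < d) {P : Pt} (hP : P ∉ sectionZeros L O d) :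
    P ≠ O := by
  rintro rfl
  exact hP (hC.mem_sectionZeros_of_finrank_le hO (by omega))

theorem single_apply_of_notMem_sectionZeros (hd : t < d) {P : Pt}
    (hP : P ∉ sectionZeros L O d) (n : ℤ) : Finsupp.single O n P = 0 :=
  Finsupp.single_eq_of_ne (hC.ne_of_notMem_sectionZeros hO hd hP)

theorem ord_eq_zero_of_mem_sectionGroup (hd : t < d) {P : Pt} (hP : P ∉ sectionZeros L O d)
    {u : Fˣ} (hu : u ∈ sectionGroup L O d) : ord P u = 0 := by
  induction hu using Subgroup.closure_induction with
  | mem u hu =>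
    have hOP := hC.single_apply_of_notMem_sectionZeros hO hd hP d
    refine le_antisymm (not_lt.mp fun h => hP ?_) (hC.ord_nonneg_of_mem_L hOP hu u.ne_zero)
    refine ne_bot_iff_exists_unit_mem.mpr ⟨u, hC.units_mem_L_sub_single hu ?_⟩
    rwa [Finsupp.add_apply, hOP, zero_add]
  | one => rw [← hC.divisor_apply, hC.divisor_one, Finsupp.zero_apply]
  | mul u v _ _ hu hv => rw [hC.ord_units_mul, hu, hv, add_zero]
  | inv u _ hu => rw [← hC.divisor_apply, hC.divisor_inv, Finsupp.neg_apply, hC.divisor_apply, hu,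
      neg_zero]

theorem divDeg_residualDivisor (l : Fˣ) (P : Pt) :
    divDeg k res (hC.residualDivisor l P O d) = d + 1 - Module.finrank k (res P) := by
  rw [residualDivisor, divDeg_add, divDeg_sub, divDeg_single_of_finrank_eq_one hO, divDeg_single,
    hC.divDeg_divisor, mul_one, add_zero]

section NewZero

variable {P Q : Pt} {l m : Fˣ} (hP : P ∉ sectionZeros L O d)
  (hl : (l : F) ∈ L (Finsupp.single O (d + 1) - Finsupp.single P 1))

include hP hl

theorem residualDivisor_apply_eq_zero (hd : 2 * t ≤ d) (hQ : Q ∉ sectionZeros L O d) :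
    hC.residualDivisor l P O d Q = 0 := by
  have hE := hC.residualDivisor_nonneg hl
  refine le_antisymm (not_lt.mp fun h => hQ (hC.mem_sectionZeros_of_finrank_le hO ?_)) (hE Q)
  have hPdeg : d < Module.finrank k (res P) + t :=
    not_le.mp fun h => hP (hC.mem_sectionZeros_of_finrank_le hO h)
  have hQdeg := finrank_le_divDeg (k := k) (res := res) hE h
  rw [hC.divDeg_residualDivisor hO] at hQdeg
  linarith

theorem ord_eq_single_apply (hd : 2 * t ≤ d) (htd : t < d) (hQ : Q ∉ sectionZeros L O d) :
    ord Q l = Finsupp.single P 1 Q := by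
  have h := hC.residualDivisor_apply_eq_zero hO hP hl hd hQ
  rw [residualDivisor, Finsupp.add_apply, Finsupp.sub_apply,
    hC.single_apply_of_notMem_sectionZeros hO htd hQ, hC.divisor_apply] at h
  linarith

theorem ord_eq_one (hd : 2 * t ≤ d) (htd : t < d) : ord P l = 1 := by
  rw [hC.ord_eq_single_apply hO hP hl hd htd hP, Finsupp.single_eq_same]

theorem notMem_L_single (hd : 2 * t ≤ d) (htd : t < d) : (l : F) ∉ L (Finsupp.single O d) :=
  fun h => one_ne_zero ((hC.ord_eq_one hO hP hl hd htd).symm.trans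
    (hC.ord_eq_zero_of_mem_sectionGroup hO htd hP (mem_sectionGroup h)))

theorem exists_add_mul_eq (hd : 2 * t ≤ d) (htd : t < d) (hQ : Q ∉ sectionZeros L O d)
    (hm : (m : F) ∈ L (Finsupp.single O (d + 1) - Finsupp.single Q 1)) (hPQ : P ≠ Q) :
    ∃ c ∈ sectionGroup L O d, ∃ r ∈ sectionGroup L O d, (l : F) + (c * m : Fˣ) = r := by
  have hle (R : Pt) : Finsupp.single O (d + 1) - Finsupp.single R 1 ≤ Finsupp.single O (d + 1) :=
    sub_le_self _ (Finsupp.single_nonneg.mpr zero_le_one)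
  have hdO : Finsupp.single O (d + 1) - Finsupp.single O 1 = Finsupp.single O d := by
    rw [← Finsupp.single_sub, add_sub_cancel_right]
  obtain ⟨a, ha⟩ := hC.exists_sub_smul_mem_L hO (hC.L_mono (hle P) hl) (hC.L_mono (hle Q) hm)
    (by rw [hdO]; exact hC.notMem_L_single hO hQ hm hd htd)
  rw [hdO, Algebra.smul_def] at ha
  have ha0 : a ≠ 0 := by
    rintro rfl
    rw [map_zero, zero_mul, sub_zero] at ha
    exact hC.notMem_L_single hO hP hl hd htd ha
  have hr0 : (l : F) - algebraMap k F a * m ≠ 0 := by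
    intro h
    have hord : ord P l = ord P (algebraMap k F a * m) := congrArg (ord P) (sub_eq_zero.mp h)
    rw [hC.ord_mul P _ _ ((map_ne_zero _).mpr ha0) m.ne_zero, hC.ord_algebraMap P a ha0,
      hC.ord_eq_one hO hP hl hd htd, hC.ord_eq_single_apply hO hQ hm hd htd hP,
      Finsupp.single_eq_of_ne hPQ] at hord
    omega
  refine ⟨-Units.map (algebraMap k F) (Units.mk0 a ha0),
    hC.mem_sectionGroup_of_eq_algebraMap (by omega) (c := -a) (by simp),
    Units.mk0 _ hr0, mem_sectionGroup ha, ?_⟩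
  simp [sub_eq_add_neg]

theorem exists_eq_mul_of_mem_L_sub (hd : 0 ≤ d)
    (hm : (m : F) ∈ L (Finsupp.single O (d + 1) - Finsupp.single P 1)) :
    ∃ c ∈ sectionGroup L O d, m = c * l := by
  have hsub : Finsupp.single O (d + 1) - Finsupp.single P 1 - Finsupp.single O 1 =
      Finsupp.single O d - Finsupp.single P 1 := by
    rw [sub_right_comm, ← Finsupp.single_sub, add_sub_cancel_right]
  have hbot : L (Finsupp.single O d - Finsupp.single P 1) = ⊥ := not_not.mp hP
  obtain ⟨c, hc⟩ := hC.exists_sub_smul_mem_L hO hm hl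
    (by rw [hsub, hbot, Submodule.mem_bot]; exact l.ne_zero)
  rw [hsub, hbot, Submodule.mem_bot, sub_eq_zero, Algebra.smul_def] at hc
  refine ⟨m * l⁻¹, hC.mem_sectionGroup_of_eq_algebraMap hd (c := c) ?_,
    (inv_mul_cancel_right m l).symm⟩
  rw [Units.val_mul, hc, Units.mul_inv_cancel_right]

theorem symbol_mem_Lsub_of_ev_mul_eq (hd : 2 * t ≤ d) (htd : t < d) {a b v w : Fˣ}
    (ha : (a : F) ∈ L (Finsupp.single O d - hC.residualDivisor l P O d))
    (hb : (b : F) ∈ L (Finsupp.single O d - hC.residualDivisor l P O d))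
    (hv : (v : F) ∈ L (Finsupp.single O d)) (hw : (w : F) ∈ L (Finsupp.single O d))
    (h : ev P a * ev P w = ev P b * ev P v) : symbol (a * w * (b * v)⁻¹) l ∈ Lsub L O d := by
  have hE := hC.residualDivisor_nonneg hl
  have hOP : Finsupp.single O d P = 0 := hC.single_apply_of_notMem_sectionZeros hO htd hP d
  have hEP : (Finsupp.single O d - hC.residualDivisor l P O d) P = 0 := by
    rw [Finsupp.sub_apply, hOP, hC.residualDivisor_apply_eq_zero hO hP hl hd hP, sub_zero]
  -- `b v - a w` vanishes at `P` and on the divisor of zeros of `l`, hence is a multiple of `l`.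
  have hdiff := hC.mul_mem_L (hC.sub_mem_L_sub_single
    (by rw [Finsupp.add_apply, hEP, hOP, add_zero]) (hC.mul_mem_L hb hv) (hC.mul_mem_L ha hw)
    (by rw [hC.ev_mul_of_mem_L hEP hOP hb hv, hC.ev_mul_of_mem_L hEP hOP ha hw, h]))
    (hC.inv_mem_L_divisor l)
  rw [show Finsupp.single O d - hC.residualDivisor l P O d + Finsupp.single O d -
    Finsupp.single P 1 + hC.divisor l = Finsupp.single O (d - 1) by
      rw [residualDivisor, Finsupp.single_add, Finsupp.single_sub]; abel] at hdiff
  have haw : a * w ∈ sectionGroup L O d :=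
    mul_mem (hC.mem_sectionGroup_of_mem_L_sub hE ha) (mem_sectionGroup hw)
  have hbv : b * v ∈ sectionGroup L O d :=
    mul_mem (hC.mem_sectionGroup_of_mem_L_sub hE hb) (mem_sectionGroup hv)
  by_cases h0 : (b * v : F) - a * w = 0
  · rw [show b * v = a * w from Units.ext (sub_eq_zero.mp h0), mul_inv_cancel, symbol_one_left]
    exact zero_mem _
  obtain ⟨q, hq⟩ : ∃ q : Fˣ, (q : F) = (b * v - a * w) * (l⁻¹ : Fˣ) :=
    ⟨Units.mk0 _ h0 * l⁻¹, by rw [Units.val_mul, Units.val_mk0]⟩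
  rw [← hq] at hdiff
  have hqG : q ∈ sectionGroup L O d := mem_sectionGroup (hC.L_single_mono (by omega) hdiff)
  have hsum : ((a * w : Fˣ) : F) + (q * l : Fˣ) = (b * v : Fˣ) := by
    rw [Units.val_mul q, hq, Units.inv_mul_cancel_right, Units.val_mul, Units.val_mul,
      add_sub_cancel]
  rw [symbol_mul_inv_eq_of_add_mul_eq hsum]
  exact sub_mem (sub_mem (add_mem (symbol_mem_Lsub haw hbv) (symbol_mem_Lsub hbv hqG))
    (symbol_mem_Lsub hbv hbv)) (symbol_mem_Lsub haw hqG)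

theorem exists_ev_eq_mul (hd : 3 * t ≤ d) (htd : t < d) (y z : (res P)ˣ) :
    ∃ b : Fˣ, (b : F) ∈ L (Finsupp.single O d - hC.residualDivisor l P O d) ∧
    ∃ a : Fˣ, (a : F) ∈ L (Finsupp.single O d - hC.residualDivisor l P O d) ∧
    ∃ c : Fˣ, (c : F) ∈ L (Finsupp.single O d) ∧
      ev P a = y * ev P b ∧ ev P c = z * ev P b := by
  have := hC.finiteDimensional_res P
  have hOP : Finsupp.single O d P = 0 := hC.single_apply_of_notMem_sectionZeros hO htd hP d
  have hEP : (Finsupp.single O d - hC.residualDivisor l P O d) P = 0 := by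
    rw [Finsupp.sub_apply, hOP, hC.residualDivisor_apply_eq_zero hO hP hl (by omega) hP, sub_zero]
  have hVbot : L (Finsupp.single O d - Finsupp.single P 1) = ⊥ := not_not.mp hP
  have hWbot : L (Finsupp.single O d - hC.residualDivisor l P O d - Finsupp.single P 1) = ⊥ :=
    eq_bot_iff.mpr (hVbot ▸ hC.L_mono
      (sub_le_sub_right (sub_le_self _ (hC.residualDivisor_nonneg hl)) _))
  have hV := hC.le_finrank_range_evalLin hOP hVbot
  have hW := hC.le_finrank_range_evalLin hEP hWbot
  rw [divDeg_single_of_finrank_eq_one hO] at hV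
  rw [divDeg_sub, divDeg_single_of_finrank_eq_one hO, hC.divDeg_residualDivisor hO] at hW
  obtain ⟨_, hb, ha, hc⟩ := exists_mem_mul_mem_mul_mem (LinearMap.range (hC.evalLin hEP))
    (LinearMap.range (hC.evalLin hEP)) (LinearMap.range (hC.evalLin hOP)) y z (by omega)
  obtain ⟨b, hbW, hbev⟩ := hC.exists_unit_ev_eq hEP _ hb
  obtain ⟨a, haW, haev⟩ := hC.exists_unit_ev_eq hEP (y * _) ha
  obtain ⟨c, hcV, hcev⟩ := hC.exists_unit_ev_eq hOP (z * _) hc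
  refine ⟨b, hbW, a, haW, c, hcV, ?_, ?_⟩
  · rw [haev, hbev, Units.val_mul]
  · rw [hcev, hbev, Units.val_mul]

variable {T : K2 F →+ Π₀ P : Pt, Additive ((res P)ˣ)} (hT : IsTameSymbol ord ev T)

include hT

theorem coe_tameHom_of_mem_sectionGroup (hd : 2 * t ≤ d) (htd : t < d) {f : Fˣ}
    (hf : f ∈ sectionGroup L O d) : (tameHom T P l f : res P) = ev P f := by
  refine (hT f l P).trans ?_
  rw [hC.ord_eq_zero_of_mem_sectionGroup hO htd hP hf, hC.ord_eq_one hO hP hl hd htd]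
  simp only [zpow_zero, zpow_one, neg_zero, mul_one, one_mul]

theorem exists_tameHom_eq_mul (hd : 3 * t ≤ d) (htd : t < d) (y z : (res P)ˣ) :
    ∃ b : Fˣ, (b : F) ∈ L (Finsupp.single O d - hC.residualDivisor l P O d) ∧
    ∃ a : Fˣ, (a : F) ∈ L (Finsupp.single O d - hC.residualDivisor l P O d) ∧
    ∃ c : Fˣ, (c : F) ∈ L (Finsupp.single O d) ∧
      tameHom T P l a = y * tameHom T P l b ∧ tameHom T P l c = z * tameHom T P l b := by
  obtain ⟨b, hb, a, ha, c, hc, hab, hcb⟩ := hC.exists_ev_eq_mul hO hP hl hd htd y z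
  have hE := hC.residualDivisor_nonneg hl
  have hev {f : Fˣ} (hf : f ∈ sectionGroup L O d) : (tameHom T P l f : res P) = ev P f :=
    hC.coe_tameHom_of_mem_sectionGroup hO hP hl hT (by omega) htd hf
  have ha' := hev (hC.mem_sectionGroup_of_mem_L_sub hE ha)
  have hb' := hev (hC.mem_sectionGroup_of_mem_L_sub hE hb)
  have hc' := hev (mem_sectionGroup hc)
  refine ⟨b, hb, a, ha, c, hc, Units.ext ?_, Units.ext ?_⟩
  · rw [Units.val_mul, ha', hb', hab]
  · rw [Units.val_mul, hc', hb', hcb]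

theorem exists_mem_sectionGroup_tameHom_eq (hd : 3 * t ≤ d) (htd : t < d) (y : (res P)ˣ) :
    ∃ f ∈ sectionGroup L O d, tameHom T P l f = y := by
  obtain ⟨b, hb, a, ha, -, -, hab, -⟩ := hC.exists_tameHom_eq_mul hO hP hl hT hd htd y 1
  have hE := hC.residualDivisor_nonneg hl
  refine ⟨a / b, div_mem (hC.mem_sectionGroup_of_mem_L_sub hE ha)
    (hC.mem_sectionGroup_of_mem_L_sub hE hb), ?_⟩
  rw [map_div, hab, mul_div_cancel_right]

theorem symbol_mem_Lsub_of_tameHom_eq_one (hd : 3 * t ≤ d) (htd : t < d) {f : Fˣ}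
    (hf : f ∈ sectionGroup L O d) (h : tameHom T P l f = 1) : symbol f l ∈ Lsub L O d := by
  have hE := hC.residualDivisor_nonneg hl
  have hev {f : Fˣ} (hf : f ∈ sectionGroup L O d) : (tameHom T P l f : res P) = ev P f :=
    hC.coe_tameHom_of_mem_sectionGroup hO hP hl hT (by omega) htd hf
  let σ : Fˣ →* Multiplicative (K2 F ⧸ Lsub L O d) :=
    (QuotientAddGroup.mk' (Lsub L O d)).toMultiplicative.comp (symbolHom l)
  have hσ {g : Fˣ} : σ g = 1 ↔ symbol g l ∈ Lsub L O d := QuotientAddGroup.eq_zero_iff _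
  refine hσ.mp (eq_one_of_mem_closure_of_fractions (tameHom T P l) σ
    (V := {u | (u : F) ∈ L (Finsupp.single O d)})
    (W := {u | (u : F) ∈ L (Finsupp.single O d - hC.residualDivisor l P O d)})
    ?_ ?_ (fun u hu => hC.L_mono (sub_le_self _ hE) hu)
    (hC.exists_tameHom_eq_mul hO hP hl hT hd htd) hf h)
  · have := hC.algebraMap_mem_L (D := Finsupp.single O d) (Finsupp.single_nonneg.mpr (by omega)) 1
    rwa [map_one] at this
  · intro a ha b hb v hv w hw hab
    rw [div_eq_div_iff_mul_eq_mul, mul_comm (tameHom T P l v)] at hab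
    have hab' := congrArg (Units.val : (res P)ˣ → res P) hab
    rw [Units.val_mul, Units.val_mul, hev (hC.mem_sectionGroup_of_mem_L_sub hE ha),
      hev (hC.mem_sectionGroup_of_mem_L_sub hE hb), hev (mem_sectionGroup hv),
      hev (mem_sectionGroup hw)] at hab'
    have hmem := hσ.mpr
      (hC.symbol_mem_Lsub_of_ev_mul_eq hO hP hl (by omega) htd ha hb hv hw hab')
    rwa [map_mul, map_inv, mul_inv_eq_one, map_mul, map_mul, mul_comm (σ b),
      ← div_eq_div_iff_mul_eq_mul] at hmem

theorem tame_symbol_apply_of_ne (hd : 2 * t ≤ d) (htd : t < d) {f : Fˣ}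
    (hf : f ∈ sectionGroup L O d) (hQ : Q ∉ sectionZeros L O d) (hQP : Q ≠ P) :
    T (symbol f l) Q = 0 := by
  refine hC.tame_symbol_eq_zero hT (hC.ord_eq_zero_of_mem_sectionGroup hO htd hQ hf) ?_
  rw [hC.ord_eq_single_apply hO hP hl hd htd hQ, Finsupp.single_eq_of_ne hQP]

end NewZero

theorem exists_le_L_single_sub_ne_bot (hd : 3 * t ≤ d) {Z : Pt →₀ ℤ} (hZ : 0 ≤ Z)
    (hdeg : divDeg k res Z = d + 1) (hsupp : ∀ P, 0 < Z P → P ∈ sectionZeros L O d) :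
    ∃ E, 0 ≤ E ∧ E ≤ Z ∧ L (Finsupp.single O d - E) ≠ ⊥ ∧
      L (Finsupp.single O d - (Z - E)) ≠ ⊥ := by
  have := hC.finiteDimensional_res
  by_cases hbig : ∃ P, 0 < Z P ∧ t < Module.finrank k (res P)
  · obtain ⟨P, hZP, hPt⟩ := hbig
    refine ⟨Finsupp.single P 1, Finsupp.single_nonneg.mpr zero_le_one,
      single_one_le_of_pos hZ hZP, hsupp P hZP, hC.L_single_sub_ne_bot hO ?_⟩
    rw [divDeg_sub, divDeg_single, hdeg]
    omega
  · push Not at hbig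
    obtain ⟨E, hE, hEZ, hEdeg⟩ := exists_le_divDeg_mem_Ico (k := k) (res := res)
      (m := t + 1) (by omega) hZ (by omega) hbig
    rw [Set.mem_Ico] at hEdeg
    refine ⟨E, hE, hEZ, hC.L_single_sub_ne_bot hO (by omega), hC.L_single_sub_ne_bot hO ?_⟩
    rw [divDeg_sub, hdeg]
    omega

theorem mem_sectionGroup_of_zeros_subset (hd : 3 * t ≤ d) {l : Fˣ}
    (hl : (l : F) ∈ L (Finsupp.single O (d + 1)))
    (hsupp : ∀ P, 0 < (Finsupp.single O (d + 1) + hC.divisor l) P → P ∈ sectionZeros L O d) :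
    l ∈ sectionGroup L O d := by
  have hdeg : divDeg k res (Finsupp.single O (d + 1) + hC.divisor l) = d + 1 := by
    rw [divDeg_add, divDeg_single_of_finrank_eq_one hO, hC.divDeg_divisor, add_zero]
  obtain ⟨E, hE, hEZ, hu, hv⟩ :=
    hC.exists_le_L_single_sub_ne_bot hO hd (hC.units_mem_L.mp hl) hdeg hsupp
  obtain ⟨u, hu⟩ := ne_bot_iff_exists_unit_mem.mp hu
  obtain ⟨v, hv⟩ := ne_bot_iff_exists_unit_mem.mp hv
  have huv : ((u * v * l⁻¹ : Fˣ) : F) ∈ L (Finsupp.single O (d - 1)) := by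
    have h := hC.mul_mem_L (hC.mul_mem_L hu hv) (hC.inv_mem_L_divisor l)
    rwa [show Finsupp.single O d - E + (Finsupp.single O d -
      (Finsupp.single O (d + 1) + hC.divisor l - E)) + hC.divisor l = Finsupp.single O (d - 1) by
        rw [Finsupp.single_add, Finsupp.single_sub]; abel] at h
  rw [show l = u * v * (u * v * l⁻¹)⁻¹ by rw [mul_inv, inv_inv, mul_inv_cancel_left]]
  exact mul_mem (mul_mem (hC.mem_sectionGroup_of_mem_L_sub hE hu)
      (hC.mem_sectionGroup_of_mem_L_sub (sub_nonneg.mpr hEZ) hv))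
    (inv_mem (mem_sectionGroup (hC.L_single_mono (by omega) huv)))

theorem sectionGroup_succ_le_closure (hd : 3 * t ≤ d) {l : newZeros L O d → Fˣ}
    (hl : ∀ P, (l P : F) ∈ L (Finsupp.single O (d + 1) - Finsupp.single P.1 1)) :
    sectionGroup L O (d + 1) ≤
      Subgroup.closure (sectionGroup L O d ∪ Set.range l : Set Fˣ) := by
  rw [sectionGroup, Subgroup.closure_le]
  intro m hm
  by_cases hsupp : ∀ P, 0 < (Finsupp.single O (d + 1) + hC.divisor m) P → P ∈ sectionZeros L O d
  · exact Subgroup.subset_closure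
      (Or.inl (hC.mem_sectionGroup_of_zeros_subset hO hd hm hsupp))
  · push Not at hsupp
    obtain ⟨P, hmP, hP⟩ := hsupp
    have hm' := hC.units_mem_L_sub_single hm hmP
    have hPnew : P ∈ newZeros L O d := ⟨ne_bot_iff_exists_unit_mem.mpr ⟨m, hm'⟩, hP⟩
    obtain ⟨c, hc, rfl⟩ := hC.exists_eq_mul_of_mem_L_sub hO hP (hl ⟨P, hPnew⟩)
      (by omega) hm'
    exact mul_mem (Subgroup.subset_closure (Or.inl hc))
      (Subgroup.subset_closure (Or.inr ⟨_, rfl⟩))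

theorem exists_mem_sectionGroup (u : Fˣ) : ∃ n : ℕ, u ∈ sectionGroup L O n := by
  set D := (hC.divisor u)⁻
  refine ⟨(divDeg k res D).toNat + t, ?_⟩
  obtain ⟨v, hv⟩ := ne_bot_iff_exists_unit_mem.mp (hC.L_single_sub_ne_bot hO (E := D)
    (d := ((divDeg k res D).toNat + t : ℕ)) (by omega))
  have huv : ((u * v : Fˣ) : F) ∈ L (Finsupp.single O (((divDeg k res D).toNat + t : ℕ) : ℤ)) := by
    refine hC.L_mono ?_ (hC.mul_mem_L (hC.mem_L_neg_divisor u) hv)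
    rw [← add_sub_assoc, add_sub_right_comm]
    exact add_le_of_nonpos_left (sub_nonpos.mpr (neg_le_negPart _))
  rw [← mul_inv_cancel_right u v]
  exact mul_mem (mem_sectionGroup huv)
    (inv_mem (hC.mem_sectionGroup_of_mem_L_sub (negPart_nonneg _) hv))

theorem exists_mem_Lsub (x : K2 F) : ∃ n : ℕ, x ∈ Lsub L O n := by
  induction x using K2_induction with
  | zero => exact ⟨0, zero_mem _⟩
  | symbol a b =>
    obtain ⟨m, hm⟩ := hC.exists_mem_sectionGroup hO a
    obtain ⟨n, hn⟩ := hC.exists_mem_sectionGroup hO b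
    exact ⟨max m n, symbol_mem_Lsub (hC.sectionGroup_mono (by omega) hm)
      (hC.sectionGroup_mono (by omega) hn)⟩
  | add x y hx hy =>
    obtain ⟨m, hm⟩ := hx
    obtain ⟨n, hn⟩ := hy
    exact ⟨max m n, add_mem (hC.Lsub_mono (by omega) hm) (hC.Lsub_mono (by omega) hn)⟩

theorem exists_support_subset_sectionZeros {M : Pt → Type*} [∀ P, Zero (M P)] (htd : t ≤ d)
    (y : Π₀ P, M P) : ∃ n : ℕ, ∀ P ∉ sectionZeros L O (d + n), y P = 0 := by
  classical
  refine ⟨y.support.sup fun P => Module.finrank k (res P), fun P hP => ?_⟩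
  by_contra h
  refine hP (hC.mem_sectionZeros_of_finrank_le hO ?_)
  have := Finset.le_sup (f := fun P => Module.finrank k (res P)) (DFinsupp.mem_support_iff.mpr h)
  omega

section TameSymbol

variable {T : K2 F →+ Π₀ P : Pt, Additive ((res P)ˣ)} (hT : IsTameSymbol ord ev T)

include hT

theorem tame_eq_zero_of_mem_Lsub (htd : t < d) {P : Pt} (hP : P ∉ sectionZeros L O d)
    {x : K2 F} (hx : x ∈ Lsub L O d) : T x P = 0 := by
  induction hx using AddSubgroup.closure_induction with
  | mem x hx =>
    obtain ⟨l, m, hl, hm, rfl⟩ := hx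
    exact hC.tame_symbol_eq_zero hT
      (hC.ord_eq_zero_of_mem_sectionGroup hO htd hP (mem_sectionGroup hl))
      (hC.ord_eq_zero_of_mem_sectionGroup hO htd hP (mem_sectionGroup hm))
  | zero => rw [map_zero, DFinsupp.zero_apply]
  | add x y _ _ hx hy => rw [map_add, DFinsupp.add_apply, hx, hy, add_zero]
  | neg x _ hx => rw [map_neg, DFinsupp.neg_apply, hx, neg_zero]

section Family

variable {l : newZeros L O d → Fˣ}
  (hl : ∀ P, (l P : F) ∈ L (Finsupp.single O (d + 1) - Finsupp.single P.1 1))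

include hl

omit hO hT in
theorem symbolSum_mem_Lsub_succ (f : newZeros L O d →₀ Additive (sectionGroup L O d)) :
    symbolSum (sectionGroup L O d) l f ∈ Lsub L O (d + 1) := by
  rw [symbolSum_apply]
  refine sum_mem fun P _ => symbol_mem_Lsub (hC.sectionGroup_mono (by omega) (f P).toMul.2) ?_
  exact hC.mem_sectionGroup_of_mem_L_sub (Finsupp.single_nonneg.mpr zero_le_one) (hl P)

omit hT in
theorem Lsub_succ_le_sup_range_symbolSum (hd : 3 * t ≤ d) (htd : t < d) :
    Lsub L O (d + 1) ≤ Lsub L O d ⊔ (symbolSum (sectionGroup L O d) l).range := by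
  refine (AddSubgroup.closure_le _).mpr ?_
  rintro _ ⟨a, b, ha, hb, rfl⟩
  have hclosure := hC.sectionGroup_succ_le_closure hO hd hl
  refine symbol_mem_sup_range_symbolSum (fun f hf g hg => symbol_mem_Lsub hf hg)
    (hC.neg_one_mem_sectionGroup (by omega)) (fun P Q hPQ => ?_)
    (hclosure (mem_sectionGroup ha)) (hclosure (mem_sectionGroup hb))
  exact hC.exists_add_mul_eq hO P.2.2 (hl P) (by omega) htd Q.2.2 (hl Q)
    (Subtype.coe_ne_coe.mpr hPQ)

theorem tame_symbolSum_apply (hd : 2 * t ≤ d) (htd : t < d)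
    (f : newZeros L O d →₀ Additive (sectionGroup L O d)) (P : newZeros L O d) :
    T (symbolSum (sectionGroup L O d) l f) P = Additive.ofMul (tameHom T P (l P) (f P).toMul) := by
  rw [symbolSum_apply, map_sum, DFinsupp.finsetSum_apply]
  refine Finset.sum_eq_single P (fun Q _ hQP => ?_) fun hP => ?_
  · exact hC.tame_symbol_apply_of_ne hO Q.2.2 (hl Q) hT hd htd (f Q).toMul.2 P.2.2
      (Subtype.coe_ne_coe.mpr hQP.symm)
  · rw [Finsupp.notMem_support_iff.mp hP, toMul_zero, Subgroup.coe_one, symbol_one_left, map_zero,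
      DFinsupp.zero_apply]

end Family

theorem mem_Lsub_of_mem_Lsub_succ (hd : 3 * t ≤ d) (htd : t < d) {x : K2 F}
    (hx : x ∈ Lsub L O (d + 1)) (hTx : ∀ P ∉ sectionZeros L O d, T x P = 0) :
    x ∈ Lsub L O d := by
  choose l hl using fun P : newZeros L O d => ne_bot_iff_exists_unit_mem.mp P.2.1
  obtain ⟨y, hy, _, ⟨f, rfl⟩, rfl⟩ :=
    AddSubgroup.mem_sup.mp (hC.Lsub_succ_le_sup_range_symbolSum hO hl hd htd hx)
  refine add_mem hy ?_
  rw [symbolSum_apply]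
  refine sum_mem fun P _ => hC.symbol_mem_Lsub_of_tameHom_eq_one hO P.2.2 (hl P) hT hd htd
    (f P).toMul.2 ?_
  have hTP := hTx P P.2.2
  rwa [map_add, DFinsupp.add_apply, hC.tame_eq_zero_of_mem_Lsub hO hT htd P.2.2 hy, zero_add,
    hC.tame_symbolSum_apply hO hT hl (by omega) htd, ofMul_eq_zero] at hTP

theorem exists_tame_eq_of_support_subset_succ (hd : 3 * t ≤ d) (htd : t < d)
    (y : Π₀ P : Pt, Additive ((res P)ˣ)) (hy : ∀ P ∉ sectionZeros L O (d + 1), y P = 0) :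
    ∃ x : K2 F, ∀ P ∉ sectionZeros L O d, T x P = y P := by
  classical
  choose l hl using fun P : newZeros L O d => ne_bot_iff_exists_unit_mem.mp P.2.1
  choose g hg hgy using fun P : newZeros L O d =>
    hC.exists_mem_sectionGroup_tameHom_eq hO P.2.2 (hl P) hT hd htd (y P).toMul
  let f : newZeros L O d →₀ Additive (sectionGroup L O d) :=
    Finsupp.indicator (y.support.subtype (· ∈ newZeros L O d)) fun P _ =>
      Additive.ofMul ⟨g P, hg P⟩
  refine ⟨symbolSum (sectionGroup L O d) l f, fun P hP => ?_⟩
  by_cases hPnew : P ∈ newZeros L O d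
  · rw [hC.tame_symbolSum_apply hO hT hl (by omega) htd f ⟨P, hPnew⟩]
    by_cases hyP : y P = 0
    · rw [Finsupp.indicator_of_notMem (by simpa using hyP), hyP, toMul_zero, Subgroup.coe_one,
        map_one, ofMul_one]
    · rw [Finsupp.indicator_of_mem (by simpa using hyP), toMul_ofMul, hgy, ofMul_toMul]
  · have hP' : P ∉ sectionZeros L O (d + 1) := fun h => hPnew ⟨h, hP⟩
    rw [hy P hP',
      hC.tame_eq_zero_of_mem_Lsub hO hT (by omega) hP' (hC.symbolSum_mem_Lsub_succ hl f)]

theorem mem_Lsub_of_tame_eq_zero (hd : 3 * t ≤ d) (htd : t < d) {x : K2 F}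
    (hTx : ∀ P ∉ sectionZeros L O d, T x P = 0) : x ∈ Lsub L O d := by
  suffices h : ∀ n : ℕ, x ∈ Lsub L O (d + n) → x ∈ Lsub L O d by
    obtain ⟨n, hn⟩ := hC.exists_mem_Lsub hO x
    exact h n (hC.Lsub_mono (by omega) hn)
  intro n hn
  induction n with
  | zero => rwa [Nat.cast_zero, add_zero] at hn
  | succ n ih =>
    rw [Nat.cast_succ, ← add_assoc] at hn
    exact ih (hC.mem_Lsub_of_mem_Lsub_succ hO hT (by omega) (by omega) hn fun P hP =>
      hTx P fun h => hP (hC.sectionZeros_mono (by omega) h))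

theorem exists_tame_eq (hd : 3 * t ≤ d) (htd : t < d) (y : Π₀ P : Pt, Additive ((res P)ˣ)) :
    ∃ x : K2 F, ∀ P ∉ sectionZeros L O d, T x P = y P := by
  obtain ⟨n, hn⟩ := hC.exists_support_subset_sectionZeros hO htd.le y
  induction n generalizing y with
  | zero =>
    rw [Nat.cast_zero, add_zero] at hn
    exact ⟨0, fun P hP => by rw [hn P hP, map_zero, DFinsupp.zero_apply]⟩
  | succ n ih =>
    rw [Nat.cast_succ, ← add_assoc] at hn
    obtain ⟨z, hz⟩ := hC.exists_tame_eq_of_support_subset_succ hO hT (by omega) (by omega) y hn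
    obtain ⟨x, hx⟩ := ih (y - T z) fun P hP => by rw [DFinsupp.sub_apply, hz P hP, sub_self]
    exact ⟨x + z, fun P hP => by
      rw [map_add, DFinsupp.add_apply, hx P hP, DFinsupp.sub_apply, sub_add_cancel]⟩

end TameSymbol

end RationalPoint

end IsProjCurve

theorem statement5_general {k F : Type*} [Field k] [Field F] [Algebra k F]
    {Pt : Type*} {res : Pt → Type*} [∀ P, Field (res P)] [∀ P, Algebra k (res P)]
    {ord : Pt → F → ℤ} {ev : ∀ P, F → res P} {L : (Pt →₀ ℤ) → Submodule k F} {t : ℕ}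
    (hC : IsProjCurve k F res ord ev L t) {O : Pt} (hO : Module.finrank k (res O) = 1)
    {T : K2 F →+ Π₀ P : Pt, Additive ((res P)ˣ)} (hT : IsTameSymbol ord ev T)
    {d : ℤ} (hd : 3 * t ≤ d) (hd₀ : 0 < d) :
    (∀ y : Π₀ P : Pt, Additive ((res P)ˣ),
      ∃ x : K2 F, ∀ P ∉ sectionZeros L O d, T x P = y P) ∧
    (∀ x : K2 F, (∀ P ∉ sectionZeros L O d, T x P = 0) ↔ x ∈ Lsub L O d) ∧
    (∀ x : K2 F, T x = 0 → x ∈ Lsub L O d) ∧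
    (∀ x ∈ Lsub L O d, ∀ P ∉ sectionZeros L O d, T x P = 0) ∧
    (∀ y : Π₀ P : Pt, Additive ((res P)ˣ), (∀ P ∉ sectionZeros L O d, y P = 0) →
      (∃ x : K2 F, T x = y) → ∃ x ∈ Lsub L O d, T x = y) ∧
    (∀ y : Π₀ P : Pt, Additive ((res P)ˣ),
      ∃ x : K2 F, ∀ P ∉ sectionZeros L O d, (y - T x) P = 0) := by
  have htd : t < d := by omega
  have hker (x : K2 F) : (∀ P ∉ sectionZeros L O d, T x P = 0) ↔ x ∈ Lsub L O d :=
    ⟨hC.mem_Lsub_of_tame_eq_zero hO hT hd htd,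
      fun hx P hP => hC.tame_eq_zero_of_mem_Lsub hO hT htd hP hx⟩
  have hsurj := hC.exists_tame_eq hO hT hd htd
  refine ⟨hsurj, hker, fun x hx => (hker x).mp fun P _ => by rw [hx, DFinsupp.zero_apply],
    fun x => (hker x).mpr, ?_, fun y => ?_⟩
  · rintro _ hy ⟨x, rfl⟩
    exact ⟨x, (hker x).mp hy, rfl⟩
  · obtain ⟨x, hx⟩ := hsurj y
    exact ⟨x, fun P hP => by rw [DFinsupp.sub_apply, hx P hP, sub_self]⟩

/-- Theorem `introker2`.  Let `C` be a regular, irreducible curve,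
projective over `k`, with function field `F`, arithmetic genus `t ≥ 1` and a
`k`-rational point `O`.  Let `S = {P : H⁰(C, O_C(3t(O) - (P))) ≠ 0}` and let `L_{3t}`
be generated by the symbols of nonzero elements of `H⁰(C, O_C(3t(O)))`.  Then the tame
symbol induces an isomorphism `K₂(F) / L_{3t} ≅ ∐_{P ∉ S} k(P)^*` (expressed by (i)
surjectivity and (ii) the kernel being `L_{3t}`); in particular (iii) the kernel of
`T` equals the kernel of its restriction to `L_{3t}`, (iv) this restriction is
supported in `S`, and (v) & (vi) the inclusion induces a bijection between the two
cokernels. -/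
theorem statement5 (k F : Type*) [Field k] [Field F] [Algebra k F]
    {Pt : Type*} (res : Pt → Type*) [∀ P, Field (res P)] [∀ P, Algebra k (res P)]
    (ord : Pt → F → ℤ) (ev : ∀ P, F → res P)
    (L : (Pt →₀ ℤ) → Submodule k F) (t : ℕ) (ht : 1 ≤ t)
    (hC : IsProjCurve k F res ord ev L t)
    (O : Pt) (hO : Module.finrank k (res O) = 1)
    (T : K2 F →+ Π₀ P : Pt, Additive ((res P)ˣ)) (hT : IsTameSymbol ord ev T)
    (S : Set Pt)
    (hS : S = {P | L (Finsupp.single O (3 * t : ℤ) - Finsupp.single P 1) ≠ ⊥}) :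
    -- (i) the induced map `K₂(F) → ∐_{P ∉ S} k(P)^*` is surjective:
    (∀ y : Π₀ P : Pt, Additive ((res P)ˣ),
      ∃ x : K2 F, ∀ P ∉ S, T x P = y P) ∧
    -- (ii) its kernel is exactly `L_{3t}`:
    (∀ x : K2 F, ((∀ P ∉ S, T x P = 0) ↔ x ∈ Lsub L O (3 * t : ℤ))) ∧
    -- (iii) the kernel of the tame symbol equals that of its restriction to `L_{3t}`:
    (∀ x : K2 F, T x = 0 → x ∈ Lsub L O (3 * t : ℤ)) ∧
    -- (iv) the restriction of `T` to `L_{3t}` lands in `∐_{P ∈ S} k(P)^*`: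
    (∀ x ∈ Lsub L O (3 * t : ℤ), ∀ P ∉ S, T x P = 0) ∧
    -- (v) the induced map between the two cokernels is injective:
    (∀ y : Π₀ P : Pt, Additive ((res P)ˣ), (∀ P ∉ S, y P = 0) →
      (∃ x : K2 F, T x = y) → ∃ x ∈ Lsub L O (3 * t : ℤ), T x = y) ∧
    -- (vi) the induced map between the two cokernels is surjective:
    (∀ y : Π₀ P : Pt, Additive ((res P)ˣ),
      ∃ x : K2 F, ∀ P ∉ S, (y - T x) P = 0) := by
  subst hS
  exact statement5_general hC hO hT le_rfl (by omega)

end
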